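/- Assume the setting of Hypothesis 3.1: H₀ self-adjoint in H, J = J* ∈ B(H) with J² = I_H, K ∈ B₂(H); decompose H = H₊ ⊕ H₋ according to the spectral decomposition of J, with J₊, J₋ the orthogonal projections onto H₊, H₋ (so J = J₊ − J₋); set V₊ = K J₊ K*, H₊ᵒᵖ = H₀ + V₊ (dom = dom H₀), V = KJK*, H = H₀ + V (dom = dom H₀), Φ₊(z) = I₊ + J₊K*(H₀ − z)⁻¹K restricted to H₊, and Φ̃₋(z) = I₋ − J₋K*(H₊ᵒᵖ − z)⁻¹K restricted to H₋. Then for z ∈ ℂ∖ℝ: (H₀ − z)⁻¹ − (H₊ᵒᵖ − z)⁻¹ and (H₊ᵒᵖ − z)⁻¹ − (H − z)⁻¹ are trace class, tr_H((H₀ − z)⁻¹ − (H₊ᵒᵖ − z)⁻¹) = (d/dz) tr_{H₊}(log(Φ₊(z))), and tr_H((H₊ᵒᵖ − z)⁻¹ − (H − z)⁻¹) = (d/dz) tr_{H₋}(log(Φ̃₋(z))). -/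

import Mathlib

open Complex Filter MeasureTheory TopologicalSpace ContinuousLinearMap
open scoped InnerProductSpace Topology

noncomputable section

namespace SpectralShift

variable {H : Type*} [NormedAddCommGroup H] [InnerProductSpace ℂ H] [CompleteSpace H]

/-- The imaginary part `(T - T*)/(2i)` of a bounded operator. -/
def imPart (T : H →L[ℂ] H) : H →L[ℂ] H :=
  ((2 * Complex.I)⁻¹ : ℂ) • (T - ContinuousLinearMap.adjoint T)

/-- An operator-valued Herglotz function: analytic on the open upper half-plane with
nonnegative imaginary part there. -/
def IsHerglotz (M : ℂ → H →L[ℂ] H) : Prop :=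
  DifferentiableOn ℂ M {z : ℂ | 0 < z.im} ∧ ∀ z : ℂ, 0 < z.im → (imPart (M z)).IsPositive

/-- The integrand `(T + iλ)⁻¹ - (1 + iλ)⁻¹ I` in the integral representation of `log T`. -/
def logIntegrand (T : H →L[ℂ] H) (t : ℝ) : H →L[ℂ] H :=
  Ring.inverse (T + ((t : ℂ) * Complex.I) • (1 : H →L[ℂ] H)) -
    (((1 : ℂ) + (t : ℂ) * Complex.I)⁻¹) • (1 : H →L[ℂ] H)

/-- `log T = -i ∫₀^∞ ((T + iλ)⁻¹ - (1 + iλ)⁻¹ I) dλ` as a norm-convergent improper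
Riemann integral, for a dissipative boundedly invertible `T`. -/
def opLog (T : H →L[ℂ] H) : H →L[ℂ] H :=
  limUnder atTop (fun R : ℝ => (-Complex.I) • ∫ t in (0:ℝ)..R, logIntegrand T t)

/-- The logarithm `log S = (log S*)*` of an operator `S` with `-S` dissipative. -/
def opLogAnti (T : H →L[ℂ] H) : H →L[ℂ] H :=
  ContinuousLinearMap.adjoint (opLog (ContinuousLinearMap.adjoint T))

/-- The logarithm of a Herglotz-type operator family on `ℂ ∖ ℝ`, using `log T` in the
upper half-plane and the convention `log S = (log S*)*` in the lower half-plane. -/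
def logHerg (Φ : ℂ → H →L[ℂ] H) (z : ℂ) : H →L[ℂ] H :=
  if 0 < z.im then opLog (Φ z) else opLogAnti (Φ z)

/-- The logarithm of an anti-Herglotz-type operator family on `ℂ ∖ ℝ` (nonpositive
imaginary part in the upper half-plane). -/
def logAntiHerg (Φ : ℂ → H →L[ℂ] H) (z : ℂ) : H →L[ℂ] H :=
  if 0 < z.im then opLogAnti (Φ z) else opLog (Φ z)

/-- Trace class: absolute summability of the diagonal in every Hilbert basis. -/
def IsTraceClass (T : H →L[ℂ] H) : Prop :=
  ∀ (w : Set H) (b : HilbertBasis w ℂ H), Summable fun i => ‖⟪(b i : H), T (b i)⟫_ℂ‖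

/-- The trace, computed in a fixed Hilbert basis (basis-independent for trace
class operators). -/
def trH (T : H →L[ℂ] H) : ℂ :=
  ∑' i, ⟪((exists_hilbertBasis ℂ H).choose_spec.choose i : H),
    T ((exists_hilbertBasis ℂ H).choose_spec.choose i)⟫_ℂ

/-- The trace norm, via duality with bounded operators (the correct value for trace
class operators). -/
def traceNorm (T : H →L[ℂ] H) : ℝ :=
  ⨆ B : {B : H →L[ℂ] H // ‖B‖ ≤ 1}, ‖trH (T * (B : H →L[ℂ] H))‖

/-- Hilbert-Schmidt operators. -/
def IsHilbertSchmidt (K : H →L[ℂ] H) : Prop :=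
  ∀ (w : Set H) (b : HilbertBasis w ℂ H), Summable fun i => ‖K (b i)‖ ^ 2

/-- A (possibly unbounded) self-adjoint operator in `H`: a densely defined symmetric
operator possessing everywhere-defined bounded resolvents at every non-real point. -/
structure SelfAdjointOp (H : Type*) [NormedAddCommGroup H] [InnerProductSpace ℂ H]
    [CompleteSpace H] where
  dom : Submodule ℂ H
  dense_dom : Dense (dom : Set H)
  op : dom →ₗ[ℂ] H
  symmetric : ∀ x y : dom, ⟪op x, (y : H)⟫_ℂ = ⟪(x : H), op y⟫_ℂ
  resolvent : ℂ → H →L[ℂ] H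
  resolvent_mem : ∀ {z : ℂ}, z.im ≠ 0 → ∀ x : H, resolvent z x ∈ dom
  op_resolvent : ∀ {z : ℂ} (hz : z.im ≠ 0) (x : H),
    op ⟨resolvent z x, resolvent_mem hz x⟩ - z • resolvent z x = x
  resolvent_op : ∀ {z : ℂ} (hz : z.im ≠ 0) (x : dom),
    resolvent z (op x - z • (x : H)) = x

/-- `B = A + V` for a bounded operator `V` (with `dom B = dom A`). -/
def IsSumOf (B A : SelfAdjointOp H) (V : H →L[ℂ] H) : Prop :=
  B.dom = A.dom ∧ ∀ (x : H) (hxB : x ∈ B.dom) (hxA : x ∈ A.dom),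
    B.op ⟨x, hxB⟩ = A.op ⟨x, hxA⟩ + V x

/-- `R` is the (bounded, everywhere defined) resolvent `(A - z)⁻¹` of `A` at `z`. -/
def SelfAdjointOp.IsResolventAt (A : SelfAdjointOp H) (z : ℂ) (R : H →L[ℂ] H) : Prop :=
  (∀ x : H, R x ∈ A.dom) ∧
  (∀ (x : H) (hx : R x ∈ A.dom), A.op ⟨R x, hx⟩ - z • R x = x) ∧
  (∀ x : A.dom, R (A.op x - z • (x : H)) = x)

/-- `E` is the projection-valued spectral measure of the self-adjoint operator `A`. -/
def IsSpectralMeasure (A : SelfAdjointOp H) (E : Set ℝ → H →L[ℂ] H) : Prop :=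
  (∀ B : Set ℝ, MeasurableSet B → IsSelfAdjoint (E B)) ∧
  (∀ B C : Set ℝ, MeasurableSet B → MeasurableSet C → E B * E C = E (B ∩ C)) ∧
  (E Set.univ = 1) ∧
  (∀ (f : ℕ → Set ℝ), (∀ n, MeasurableSet (f n)) → Pairwise (Function.onFun Disjoint f) →
    ∀ x : H, HasSum (fun n => E (f n) x) (E (⋃ n, f n) x)) ∧
  ∃ μ : H → Measure ℝ,
    (∀ (f : H) (B : Set ℝ), MeasurableSet B → μ f B = ENNReal.ofReal (⟪f, E B f⟫_ℂ).re) ∧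
    ∀ (z : ℂ), z.im ≠ 0 → ∀ f : H,
      ⟪f, A.resolvent z f⟫_ℂ = ∫ l : ℝ, ((l : ℂ) - z)⁻¹ ∂(μ f)

/-- Invertibility of `T` restricted to the range of the orthogonal projection `P`
(for `T` commuting with `P`), with inverse `S` supported in `ran P`. -/
def InvertibleOn (T P : H →L[ℂ] H) : Prop :=
  ∃ S : H →L[ℂ] H, S * P = S ∧ P * S = S ∧ S * (T * P) = P ∧ (P * T) * S = P

/-- The spectral projection `J₊ = (I + J)/2` onto `H₊` for a self-adjoint unitary `J`. -/
def Jplus (J : H →L[ℂ] H) : H →L[ℂ] H := ((2 : ℂ)⁻¹) • (1 + J)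

/-- The spectral projection `J₋ = (I - J)/2` onto `H₋` for a self-adjoint unitary `J`. -/
def Jminus (J : H →L[ℂ] H) : H →L[ℂ] H := ((2 : ℂ)⁻¹) • (1 - J)

/-- `Φ₊(z) = I + J₊ K* (H₀ - z)⁻¹ K J₊`, the operator on `H` inducing `Φ₊(z)` on `H₊`
(and the identity on `H₋`). -/
def PhiPlus (H0 : SelfAdjointOp H) (J K : H →L[ℂ] H) (z : ℂ) : H →L[ℂ] H :=
  1 + Jplus J * (ContinuousLinearMap.adjoint K * H0.resolvent z * K) * Jplus J

/-- `Φ̃₋(z) = I - J₋ K* (H₊ - z)⁻¹ K J₋`, the operator on `H` inducing `Φ̃₋(z)` on `H₋`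
(and the identity on `H₊`). -/
def PhiMinusT (Hp : SelfAdjointOp H) (J K : H →L[ℂ] H) (z : ℂ) : H →L[ℂ] H :=
  1 - Jminus J * (ContinuousLinearMap.adjoint K * Hp.resolvent z * K) * Jminus J

open scoped InnerProduct

/-!
For dissipative invertible `T`, the integrand of `log T` factors as
`-(1 + it)⁻¹ (T + it)⁻¹ (T - 1)`. When `T = 1 + C R(w) B` with `B` and `C` Hilbert–Schmidt, its
trace is therefore a bounded bilinear function of `(T + it)⁻¹` and `R(w)`, and one may
differentiate in `w` under the integral. By cyclicity of the trace the result is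
`i tr ((T + it)⁻² T')`, and `i (T + it)⁻²` integrates over `t > 0` to `T⁻¹`, so that
`(tr log T)' = tr (T⁻¹ T')`. For `T(w) = 1 + s B* (A - w)⁻¹ B` the second resolvent identity turns
the right-hand side into `tr ((A - w)⁻¹ - (A + s B B* - w)⁻¹)`. The two claims are the cases
`B = K J₊`, `s = 1`, `A = H₀` and `B = K J₋`, `s = -1`, `A = H₀ + K J₊ K*`.
-/

section HilbertSchmidt

lemma hasSum_sq_norm_inner {𝕜 E ι : Type*} [RCLike 𝕜] [NormedAddCommGroup E]
    [InnerProductSpace 𝕜 E] (b : HilbertBasis ι 𝕜 E) (x : E) :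
    HasSum (fun i => ‖inner 𝕜 (b i) x‖ ^ 2) (‖x‖ ^ 2) := by
  simpa [b.repr_apply_apply] using lp.hasSum_norm (by norm_num) (b.repr x)

lemma norm_inner_apply_eq_norm_inner_adjoint (T : H →L[ℂ] H) (x y : H) :
    ‖⟪x, T y⟫_ℂ‖ = ‖⟪y, (T†) x⟫_ℂ‖ := by
  rw [← adjoint_inner_left, norm_inner_symm]

lemma adjoint_mul (X Y : H →L[ℂ] H) : (X * Y)† = Y† * X† :=
  adjoint_comp X Y

variable {T : H →L[ℂ] H}

omit [CompleteSpace H] in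
lemma IsHilbertSchmidt.summable_sq_norm_inner (hT : IsHilbertSchmidt T) {w : Set H}
    (b : HilbertBasis w ℂ H) : Summable fun p : w × w => ‖⟪b p.1, T (b p.2)⟫_ℂ‖ ^ 2 := by
  have hswap : Summable fun p : w × w => ‖⟪b p.2, T (b p.1)⟫_ℂ‖ ^ 2 := by
    refine (summable_prod_of_nonneg fun p => by positivity).2 ⟨fun j => ?_, ?_⟩
    · exact (hasSum_sq_norm_inner b (T (b j))).summable
    · simpa only [(hasSum_sq_norm_inner b _).tsum_eq] using hT w b
  exact hswap.prod_symm

lemma IsHilbertSchmidt.adjoint (hT : IsHilbertSchmidt T) : IsHilbertSchmidt (T†) := by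
  intro w b
  simpa only [norm_inner_apply_eq_norm_inner_adjoint T, (hasSum_sq_norm_inner b _).tsum_eq]
    using (hT.summable_sq_norm_inner b).prod

omit [CompleteSpace H] in
lemma sq_norm_mul_apply_le (X T : H →L[ℂ] H) (x : H) :
    ‖(X * T) x‖ ^ 2 ≤ ‖X‖ ^ 2 * ‖T x‖ ^ 2 := by
  rw [← mul_pow]
  gcongr
  exact X.le_opNorm _

omit [CompleteSpace H] in
lemma IsHilbertSchmidt.const_mul (hT : IsHilbertSchmidt T) (X : H →L[ℂ] H) :
    IsHilbertSchmidt (X * T) := fun w b =>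
  .of_nonneg_of_le (fun _ => by positivity) (fun i => sq_norm_mul_apply_le X T (b i))
    ((hT w b).mul_left _)

lemma IsHilbertSchmidt.mul_const (hT : IsHilbertSchmidt T) (X : H →L[ℂ] H) :
    IsHilbertSchmidt (T * X) := by
  simpa only [adjoint_mul, adjoint_adjoint] using (hT.adjoint.const_mul (X†)).adjoint

end HilbertSchmidt

section Trace

variable {S T X Y B C : H →L[ℂ] H}

/-- The Hilbert basis in which `trH` is computed. -/
def trBasis (H : Type*) [NormedAddCommGroup H] [InnerProductSpace ℂ H] [CompleteSpace H] :
    HilbertBasis (exists_hilbertBasis ℂ H).choose ℂ H :=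
  (exists_hilbertBasis ℂ H).choose_spec.choose

lemma trH_eq_tsum (T : H →L[ℂ] H) : trH T = ∑' i, ⟪trBasis H i, T (trBasis H i)⟫_ℂ := rfl

lemma IsTraceClass.hasSum (hT : IsTraceClass T) :
    HasSum (fun i => ⟪trBasis H i, T (trBasis H i)⟫_ℂ) (trH T) :=
  (Summable.of_norm (hT _ (trBasis H))).hasSum

omit [CompleteSpace H] in
lemma IsTraceClass.add (hS : IsTraceClass S) (hT : IsTraceClass T) : IsTraceClass (S + T) := by
  intro w b
  refine .of_nonneg_of_le (fun _ => norm_nonneg _) (fun i => ?_) ((hS w b).add (hT w b))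
  rw [add_apply, inner_add_right]
  exact norm_add_le _ _

omit [CompleteSpace H] in
lemma IsTraceClass.const_smul (hT : IsTraceClass T) (c : ℂ) : IsTraceClass (c • T) := by
  intro w b
  simpa only [smul_apply, inner_smul_right, norm_mul] using (hT w b).mul_left ‖c‖

lemma trH_add (hS : IsTraceClass S) (hT : IsTraceClass T) : trH (S + T) = trH S + trH T := by
  refine (hS.add hT).hasSum.unique ?_
  simpa only [add_apply, inner_add_right] using hS.hasSum.add hT.hasSum

lemma trH_smul (c : ℂ) (T : H →L[ℂ] H) : trH (c • T) = c * trH T := by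
  simp only [trH_eq_tsum, smul_apply, inner_smul_right, tsum_mul_left]

lemma trH_adjoint (T : H →L[ℂ] H) : trH (T†) = starRingEnd ℂ (trH T) := by
  simp only [trH_eq_tsum, Complex.conj_tsum, adjoint_inner_right, inner_conj_symm]

lemma IsHilbertSchmidt.isTraceClass_mul (hX : IsHilbertSchmidt X) (hY : IsHilbertSchmidt Y) :
    IsTraceClass (X * Y) := by
  intro w b
  refine .of_nonneg_of_le (fun _ => norm_nonneg _) (fun i => ?_) ((hX.adjoint w b).add (hY w b))
  rw [mul_apply_eq_comp, ← adjoint_inner_left]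
  calc ‖⟪(X†) (b i), Y (b i)⟫_ℂ‖ ≤ ‖(X†) (b i)‖ * ‖Y (b i)‖ := norm_inner_le_norm _ _
    _ ≤ ‖(X†) (b i)‖ ^ 2 + ‖Y (b i)‖ ^ 2 := by
      nlinarith [sq_nonneg (‖(X†) (b i)‖ - ‖Y (b i)‖), sq_nonneg (‖(X†) (b i)‖ + ‖Y (b i)‖)]

lemma trH_mul_eq_tsum_tsum (X Y : H →L[ℂ] H) :
    trH (X * Y) = ∑' i, ∑' j, ⟪trBasis H i, X (trBasis H j)⟫_ℂ *
      ⟪trBasis H j, Y (trBasis H i)⟫_ℂ := by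
  simp only [trH_eq_tsum, mul_apply_eq_comp, ← adjoint_inner_left X,
    (trBasis H).tsum_inner_mul_inner]

lemma trH_mul_comm (hX : IsHilbertSchmidt X) (hY : IsHilbertSchmidt Y) :
    trH (X * Y) = trH (Y * X) := by
  rw [trH_mul_eq_tsum_tsum, trH_mul_eq_tsum_tsum]
  set b := trBasis H
  have hsum : Summable (Function.uncurry fun i j => ⟪b i, X (b j)⟫_ℂ * ⟪b j, Y (b i)⟫_ℂ) := by
    refine .of_norm (.of_nonneg_of_le (fun _ => norm_nonneg _) (fun ⟨i, j⟩ => ?_)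
      ((hX.summable_sq_norm_inner b).add (hY.summable_sq_norm_inner b).prod_symm))
    simp only [Function.uncurry, norm_mul, Prod.swap]
    nlinarith [sq_nonneg (‖⟪b i, X (b j)⟫_ℂ‖ - ‖⟪b j, Y (b i)⟫_ℂ‖),
      sq_nonneg (‖⟪b i, X (b j)⟫_ℂ‖ + ‖⟪b j, Y (b i)⟫_ℂ‖)]
  exact hsum.tsum_comm.symm.trans (tsum_congr fun _ => tsum_congr fun _ => mul_comm _ _)

/-- The Hilbert–Schmidt norm, computed in the basis of `trH`; it has the junk value `0` when `T`
is not Hilbert–Schmidt. -/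
def hsNorm (T : H →L[ℂ] H) : ℝ := √(∑' i, ‖T (trBasis H i)‖ ^ 2)

lemma hsNorm_nonneg (T : H →L[ℂ] H) : 0 ≤ hsNorm T := Real.sqrt_nonneg _

lemma hsNorm_eq_sqrt_tsum_tsum (T : H →L[ℂ] H) :
    hsNorm T = √(∑' i, ∑' j, ‖⟪trBasis H j, T (trBasis H i)⟫_ℂ‖ ^ 2) := by
  simp only [hsNorm, (hasSum_sq_norm_inner (trBasis H) _).tsum_eq]

lemma hsNorm_adjoint (hT : IsHilbertSchmidt T) : hsNorm (T†) = hsNorm T := by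
  simp only [hsNorm_eq_sqrt_tsum_tsum, norm_inner_apply_eq_norm_inner_adjoint T]
  exact congrArg _ (Summable.tsum_comm (hT.adjoint.summable_sq_norm_inner (trBasis H)))

lemma hsNorm_mul_le (hT : IsHilbertSchmidt T) (X : H →L[ℂ] H) :
    hsNorm (X * T) ≤ ‖X‖ * hsNorm T := by
  calc hsNorm (X * T) ≤ √(‖X‖ ^ 2 * ∑' i, ‖T (trBasis H i)‖ ^ 2) := by
        rw [← tsum_mul_left]
        exact Real.sqrt_le_sqrt (Summable.tsum_le_tsum (fun i => sq_norm_mul_apply_le X T _)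
          (hT.const_mul X _ _) ((hT _ _).mul_left _))
    _ = ‖X‖ * hsNorm T := by
        rw [Real.sqrt_mul (sq_nonneg _), Real.sqrt_sq (norm_nonneg _), hsNorm]

lemma norm_trH_mul_le (hX : IsHilbertSchmidt X) (hY : IsHilbertSchmidt Y) :
    ‖trH (X * Y)‖ ≤ hsNorm X * hsNorm Y := by
  obtain ⟨hsum, hle⟩ := Real.summable_and_inner_le_Lp_mul_Lq_tsum_of_nonneg
    (f := fun i => ‖(X†) (trBasis H i)‖) (g := fun i => ‖Y (trBasis H i)‖)
    .two_two (fun _ => norm_nonneg _) (fun _ => norm_nonneg _)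
    (by simpa only [Real.rpow_two] using hX.adjoint _ (trBasis H))
    (by simpa only [Real.rpow_two] using hY _ (trBasis H))
  simp only [Real.rpow_two, ← Real.sqrt_eq_rpow] at hle
  rw [← hsNorm_adjoint hX]
  refine (tsum_of_norm_bounded hsum.hasSum fun i => ?_).trans hle
  rw [mul_apply_eq_comp, ← adjoint_inner_left]
  exact norm_inner_le_norm _ _

lemma isTraceClass_mul_sandwich (hC : IsHilbertSchmidt C) (hB : IsHilbertSchmidt B)
    (X Y : H →L[ℂ] H) : IsTraceClass (X * (C * Y * B)) := by
  rw [mul_assoc C, ← mul_assoc]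
  exact (hC.const_mul X).isTraceClass_mul (hB.const_mul Y)

lemma norm_trH_mul_sandwich_le (hC : IsHilbertSchmidt C) (hB : IsHilbertSchmidt B)
    (X Y : H →L[ℂ] H) : ‖trH (X * (C * Y * B))‖ ≤ hsNorm C * hsNorm B * ‖X‖ * ‖Y‖ := by
  rw [mul_assoc C, ← mul_assoc]
  calc ‖trH (X * C * (Y * B))‖ ≤ hsNorm (X * C) * hsNorm (Y * B) :=
        norm_trH_mul_le (hC.const_mul X) (hB.const_mul Y)
    _ ≤ (‖X‖ * hsNorm C) * (‖Y‖ * hsNorm B) :=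
        mul_le_mul (hsNorm_mul_le hC X) (hsNorm_mul_le hB Y) (hsNorm_nonneg _)
          (mul_nonneg (norm_nonneg X) (hsNorm_nonneg C))
    _ = hsNorm C * hsNorm B * ‖X‖ * ‖Y‖ := by ring

/-- The bounded bilinear form `(X, Y) ↦ tr (X C Y B)` attached to Hilbert–Schmidt operators `C`
and `B`. It turns operator-norm limits, derivatives and integrals of `X` and `Y` into limits,
derivatives and integrals of traces. -/
def traceForm (hC : IsHilbertSchmidt C) (hB : IsHilbertSchmidt B) :
    (H →L[ℂ] H) →L[ℂ] (H →L[ℂ] H) →L[ℂ] ℂ :=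
  have htc (X Y : H →L[ℂ] H) := isTraceClass_mul_sandwich hC hB X Y
  LinearMap.mkContinuous₂
    (LinearMap.mk₂ ℂ (fun X Y => trH (X * (C * Y * B)))
      (fun X X' Y => by rw [add_mul, trH_add (htc X Y) (htc X' Y)])
      (fun c X Y => by rw [smul_mul_assoc, trH_smul, smul_eq_mul])
      (fun X Y Y' => by rw [mul_add, add_mul, mul_add, trH_add (htc X Y) (htc X Y')])
      (fun c X Y => by rw [mul_smul_comm, smul_mul_assoc, mul_smul_comm, trH_smul, smul_eq_mul]))
    (hsNorm C * hsNorm B) (norm_trH_mul_sandwich_le hC hB)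

@[simp]
lemma traceForm_apply (hC : IsHilbertSchmidt C) (hB : IsHilbertSchmidt B) (X Y : H →L[ℂ] H) :
    traceForm hC hB X Y = trH (X * (C * Y * B)) := rfl

lemma trH_sandwich_mul_comm (hC : IsHilbertSchmidt C) (hB : IsHilbertSchmidt B)
    (X Y : H →L[ℂ] H) : trH (C * Y * B * X) = trH (X * (C * Y * B)) := by
  calc trH (C * Y * B * X) = trH (C * (Y * B * X)) := by simp only [mul_assoc]
    _ = trH (Y * B * (X * C)) := by
      rw [trH_mul_comm hC ((hB.const_mul Y).mul_const X), mul_assoc (Y * B)]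
    _ = trH (X * (C * Y * B)) := by
      rw [trH_mul_comm (hB.const_mul Y) (hC.const_mul X)]
      simp only [mul_assoc]

end Trace


section Log

lemma hasDerivAt_ringInverse {𝕜 R : Type*} [NontriviallyNormedField 𝕜] [NormedRing R]
    [HasSummableGeomSeries R] [NormedAlgebra 𝕜 R] {f : 𝕜 → R} {f' : R} {x : 𝕜}
    (hf : HasDerivAt f f' x) (hx : IsUnit (f x)) :
    HasDerivAt (fun y => Ring.inverse (f y)) (-(Ring.inverse (f x) * f' * Ring.inverse (f x)))
      x := by
  obtain ⟨u, hu⟩ := hx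
  rw [← hu, Ring.inverse_unit]
  exact HasFDerivAt.comp_hasDerivAt x (hu ▸ hasFDerivAt_ringInverse u) hf

omit [CompleteSpace H] in
lemma inner_self_eq_ofReal_sq_norm (x : H) : ⟪x, x⟫_ℂ = ((‖x‖ ^ 2 : ℝ) : ℂ) := by
  exact_mod_cast inner_self_eq_norm_sq_to_K (𝕜 := ℂ) x

variable {T : H →L[ℂ] H} {t : ℝ}

/-- A bounded operator is dissipative if its quadratic form takes values in the closed upper
half-plane. -/
def IsDissipative (T : H →L[ℂ] H) : Prop := ∀ x, 0 ≤ (⟪x, T x⟫_ℂ).im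

/-- The resolvent `(T + it)⁻¹` on the imaginary axis, along which `opLog` integrates. It is the
junk value `0` when `T + it` is not boundedly invertible. -/
def imagResolvent (T : H →L[ℂ] H) (t : ℝ) : H →L[ℂ] H :=
  Ring.inverse (T + ((t : ℂ) * Complex.I) • (1 : H →L[ℂ] H))

omit [CompleteSpace H] in
lemma IsDissipative.mul_sq_norm_le (hT : IsDissipative T) (t : ℝ) (x : H) :
    t * ‖x‖ ^ 2 ≤ ‖⟪(T + ((t : ℂ) * Complex.I) • (1 : H →L[ℂ] H)) x, x⟫_ℂ‖ := by
  have him : (⟪x, (T + ((t : ℂ) * Complex.I) • (1 : H →L[ℂ] H)) x⟫_ℂ).im =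
      (⟪x, T x⟫_ℂ).im + t * ‖x‖ ^ 2 := by
    rw [add_apply, inner_add_right, smul_apply, one_apply_eq_self, inner_smul_right,
      inner_self_eq_ofReal_sq_norm, Complex.add_im, Complex.im_mul_ofReal, Complex.im_ofReal_mul,
      Complex.I_im, mul_one]
  rw [norm_inner_symm]
  linarith [hT x, (le_abs_self _).trans
    (Complex.abs_im_le_norm ⟪x, (T + ((t : ℂ) * Complex.I) • (1 : H →L[ℂ] H)) x⟫_ℂ)]

lemma IsDissipative.isUnit_add (hT : IsDissipative T) (hunit : IsUnit T) (ht : 0 ≤ t) :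
    IsUnit (T + ((t : ℂ) * Complex.I) • (1 : H →L[ℂ] H)) := by
  rcases ht.eq_or_lt with rfl | ht0
  · simpa using hunit
  · refine isUnit_of_forall_le_norm_inner_map _ (c := ⟨t, ht⟩) ht0 fun x => ?_
    rw [mul_comm]
    exact hT.mul_sq_norm_le t x

lemma IsDissipative.mul_norm_imagResolvent_le (hT : IsDissipative T) (hunit : IsUnit T)
    (ht : 0 ≤ t) : t * ‖imagResolvent T t‖ ≤ 1 := by
  rcases ht.eq_or_lt with rfl | ht0
  · simp
  rw [← le_div_iff₀' ht0]
  refine opNorm_le_bound _ (by positivity) fun y => ?_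
  set x := imagResolvent T t y
  have hx : (T + ((t : ℂ) * Complex.I) • (1 : H →L[ℂ] H)) x = y := by
    rw [← mul_apply_eq_comp, imagResolvent, Ring.mul_inverse_cancel _ (hT.isUnit_add hunit ht),
      one_apply_eq_self]
  have hle : t * ‖x‖ ^ 2 ≤ ‖y‖ * ‖x‖ :=
    (hT.mul_sq_norm_le t x).trans (hx ▸ norm_inner_le_norm _ _)
  rw [div_mul_eq_mul_div, one_mul, le_div_iff₀' ht0]
  rcases (norm_nonneg x).eq_or_lt with hx0 | hx0
  · rw [← hx0, mul_zero]
    exact norm_nonneg y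
  · nlinarith

lemma IsDissipative.norm_imagResolvent_le (hT : IsDissipative T) (hunit : IsUnit T)
    (ht : 0 ≤ t) :
    ‖imagResolvent T t‖ ≤ (1 + 2 * ‖Ring.inverse T‖) * (1 + t)⁻¹ := by
  have htQ := hT.mul_norm_imagResolvent_le hunit ht
  have hQ : imagResolvent T t =
      Ring.inverse T - ((t : ℂ) * Complex.I) • (Ring.inverse T * imagResolvent T t) := by
    have h := Ring.mul_inverse_cancel _ (hT.isUnit_add hunit ht)
    rw [add_mul, smul_mul_assoc, one_mul] at h
    calc imagResolvent T t = Ring.inverse T * (T * imagResolvent T t) := by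
          rw [← mul_assoc, Ring.inverse_mul_cancel _ hunit, one_mul]
      _ = Ring.inverse T * (1 - ((t : ℂ) * Complex.I) • imagResolvent T t) :=
          congrArg _ (eq_sub_of_add_eq h)
      _ = _ := by rw [mul_sub, mul_one, mul_smul_comm]
  have hle : ‖imagResolvent T t‖ ≤ 2 * ‖Ring.inverse T‖ := by
    have hnorm : ‖(t : ℂ) * Complex.I‖ = t := by simp [abs_of_nonneg ht]
    calc ‖imagResolvent T t‖
        ≤ ‖Ring.inverse T‖ + t * (‖Ring.inverse T‖ * ‖imagResolvent T t‖) := by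
          conv_lhs => rw [hQ]
          refine (norm_sub_le _ _).trans ?_
          rw [norm_smul, hnorm]
          gcongr
          exact norm_mul_le _ _
      _ ≤ 2 * ‖Ring.inverse T‖ := by nlinarith [norm_nonneg (Ring.inverse T)]
  rw [← div_eq_mul_inv, le_div_iff₀ (by linarith)]
  linarith

lemma IsDissipative.hasDerivAt_imagResolvent (hT : IsDissipative T) (hunit : IsUnit T)
    (ht : 0 ≤ t) :
    HasDerivAt (imagResolvent T) (-(Complex.I • (imagResolvent T t * imagResolvent T t))) t := by
  have hlin : HasDerivAt (fun t : ℝ => T + ((t : ℂ) * Complex.I) • (1 : H →L[ℂ] H))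
      (Complex.I • (1 : H →L[ℂ] H)) t := by
    simpa using ((Complex.ofRealCLM.hasDerivAt (x := t)).mul_const Complex.I).smul_const
      (1 : H →L[ℂ] H) |>.const_add T
  refine (hasDerivAt_ringInverse hlin (hT.isUnit_add hunit ht)).congr_deriv ?_
  rw [mul_smul_comm, mul_one, smul_mul_assoc]
  rfl

lemma IsDissipative.continuousOn_imagResolvent (hT : IsDissipative T) (hunit : IsUnit T) :
    ContinuousOn (imagResolvent T) (Set.Ici 0) := fun _ ht =>
  (hT.hasDerivAt_imagResolvent hunit ht).continuousAt.continuousWithinAt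

lemma one_add_mul_I_ne_zero (t : ℝ) : (1 : ℂ) + t * Complex.I ≠ 0 := fun h => by
  simpa using congrArg Complex.re h

lemma continuous_inv_one_add_mul_I : Continuous fun t : ℝ => ((1 : ℂ) + t * Complex.I)⁻¹ :=
  Continuous.inv₀ (by fun_prop) one_add_mul_I_ne_zero

lemma norm_inv_one_add_mul_I_le (ht : 0 ≤ t) :
    ‖((1 : ℂ) + t * Complex.I)⁻¹‖ ≤ 2 * (1 + t)⁻¹ := by
  have hre : 1 ≤ ‖(1 : ℂ) + t * Complex.I‖ := by
    simpa using Complex.re_le_norm ((1 : ℂ) + t * Complex.I)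
  have him : t ≤ ‖(1 : ℂ) + t * Complex.I‖ := by
    simpa using Complex.im_le_norm ((1 : ℂ) + t * Complex.I)
  rw [norm_inv, ← div_eq_mul_inv, inv_eq_one_div, div_le_div_iff₀ (by linarith) (by linarith)]
  linarith

lemma integrableOn_sq_inv_one_add :
    IntegrableOn (fun t : ℝ => ((1 + t)⁻¹) ^ 2) (Set.Ioi 0) := by
  refine (integrable_inv_one_add_sq.integrableOn (s := Set.Ioi 0)).mono'
    (by fun_prop) ((ae_restrict_mem measurableSet_Ioi).mono fun t (ht : 0 < t) => ?_)
  rw [Real.norm_of_nonneg (by positivity), inv_pow]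
  gcongr
  nlinarith

lemma integrableOn_Ioi_of_norm_le_sq_inv_one_add {E : Type*} [NormedAddCommGroup E] {f : ℝ → E}
    {M : ℝ} (hf : ContinuousOn f (Set.Ici 0)) (hM : ∀ t, 0 ≤ t → ‖f t‖ ≤ M * ((1 + t)⁻¹) ^ 2) :
    IntegrableOn f (Set.Ioi 0) :=
  (integrableOn_sq_inv_one_add.const_mul M).mono'
    ((hf.mono Set.Ioi_subset_Ici_self).aestronglyMeasurable measurableSet_Ioi)
    ((ae_restrict_mem measurableSet_Ioi).mono fun t ht => hM t (le_of_lt ht))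

lemma IsDissipative.integrableOn_smul_imagResolvent (hT : IsDissipative T) (hunit : IsUnit T) :
    IntegrableOn (fun t : ℝ => ((1 : ℂ) + t * Complex.I)⁻¹ • imagResolvent T t) (Set.Ioi 0) := by
  refine integrableOn_Ioi_of_norm_le_sq_inv_one_add (M := 2 * (1 + 2 * ‖Ring.inverse T‖))
    (continuous_inv_one_add_mul_I.continuousOn.smul (hT.continuousOn_imagResolvent hunit))
    fun t ht => ?_
  calc ‖((1 : ℂ) + t * Complex.I)⁻¹ • imagResolvent T t‖
      ≤ (2 * (1 + t)⁻¹) * ((1 + 2 * ‖Ring.inverse T‖) * (1 + t)⁻¹) := by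
        rw [norm_smul]
        gcongr
        · exact norm_inv_one_add_mul_I_le ht
        · exact hT.norm_imagResolvent_le hunit ht
    _ = _ := by ring

lemma IsDissipative.integrableOn_imagResolvent_mul_self (hT : IsDissipative T)
    (hunit : IsUnit T) :
    IntegrableOn (fun t : ℝ => imagResolvent T t * imagResolvent T t) (Set.Ioi 0) := by
  refine integrableOn_Ioi_of_norm_le_sq_inv_one_add (M := (1 + 2 * ‖Ring.inverse T‖) ^ 2)
    ((hT.continuousOn_imagResolvent hunit).mul (hT.continuousOn_imagResolvent hunit))
    fun t ht => ?_
  rw [← mul_pow, sq]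
  exact norm_mul_le_of_le (hT.norm_imagResolvent_le hunit ht) (hT.norm_imagResolvent_le hunit ht)

lemma IsDissipative.smul_integral_imagResolvent_mul_self (hT : IsDissipative T)
    (hunit : IsUnit T) :
    Complex.I • ∫ t in Set.Ioi (0 : ℝ), imagResolvent T t * imagResolvent T t =
      Ring.inverse T := by
  have hlim : Tendsto (imagResolvent T) atTop (𝓝 0) := by
    refine squeeze_zero_norm' ((eventually_ge_atTop 0).mono fun t ht =>
      hT.norm_imagResolvent_le hunit ht) ?_
    simpa using (tendsto_inv_atTop_zero.comp (tendsto_atTop_add_const_left atTop 1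
      tendsto_id)).const_mul (1 + 2 * ‖Ring.inverse T‖)
  have hftc := integral_Ioi_of_hasDerivAt_of_tendsto'
    (fun t ht => hT.hasDerivAt_imagResolvent hunit ht)
    ((hT.integrableOn_imagResolvent_mul_self hunit).smul Complex.I).neg hlim
  rw [integral_neg, integral_smul, zero_sub, neg_inj] at hftc
  simpa [imagResolvent] using hftc

omit [CompleteSpace H] in
lemma inv_smul_imagResolvent_mul_sub_one
    (h : IsUnit (T + ((t : ℂ) * Complex.I) • (1 : H →L[ℂ] H))) :
    (((1 : ℂ) + t * Complex.I)⁻¹ • imagResolvent T t) * (T - 1) =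
      ((1 : ℂ) + t * Complex.I)⁻¹ • 1 - imagResolvent T t := by
  have hcancel : imagResolvent T t * (T + ((t : ℂ) * Complex.I) • 1) = 1 :=
    Ring.inverse_mul_cancel _ h
  have hQ : imagResolvent T t * (T - 1) =
      1 - ((1 : ℂ) + t * Complex.I) • imagResolvent T t := by
    rw [mul_add, mul_smul_comm, mul_one] at hcancel
    rw [mul_sub, mul_one, ← hcancel, add_smul, one_smul]
    abel
  rw [smul_mul_assoc, hQ, smul_sub, smul_smul, inv_mul_cancel₀ (one_add_mul_I_ne_zero t),
    one_smul]

lemma IsDissipative.logIntegrand_eq (hT : IsDissipative T) (hunit : IsUnit T) (ht : 0 ≤ t) :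
    logIntegrand T t = -((((1 : ℂ) + t * Complex.I)⁻¹ • imagResolvent T t) * (T - 1)) := by
  rw [inv_smul_imagResolvent_mul_sub_one (hT.isUnit_add hunit ht), neg_sub]
  rfl

lemma IsDissipative.opLog_eq (hT : IsDissipative T) (hunit : IsUnit T) :
    opLog T = (Complex.I • ∫ t in Set.Ioi (0 : ℝ),
      ((1 : ℂ) + t * Complex.I)⁻¹ • imagResolvent T t) * (T - 1) := by
  set f := fun t : ℝ => ((1 : ℂ) + t * Complex.I)⁻¹ • imagResolvent T t
  have hf : IntegrableOn f (Set.Ioi 0) := hT.integrableOn_smul_imagResolvent hunit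
  have heq : Set.EqOn (logIntegrand T) (fun t => -(f t * (T - 1))) (Set.Ioi 0) :=
    fun t ht => hT.logIntegrand_eq hunit (le_of_lt ht)
  have hint : IntegrableOn (logIntegrand T) (Set.Ioi 0) :=
    IntegrableOn.congr_fun (hf.mul_const _).neg heq.symm measurableSet_Ioi
  have hval : ∫ t in Set.Ioi (0 : ℝ), logIntegrand T t =
      -((∫ t in Set.Ioi (0 : ℝ), f t) * (T - 1)) := by
    rw [setIntegral_congr_fun measurableSet_Ioi heq, integral_neg,
      integral_mul_const_of_integrable hf]
  have hlim := (intervalIntegral_tendsto_integral_Ioi 0 hint tendsto_id).const_smul (-Complex.I)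
  rw [hval, smul_neg, neg_smul, neg_neg, ← smul_mul_assoc] at hlim
  exact hlim.limUnder_eq

end Log


section TraceLog

variable {B C X : H →L[ℂ] H} {R : ℂ → H →L[ℂ] H} {z : ℂ}

lemma IsDissipative.trH_opLog_one_add (hC : IsHilbertSchmidt C) (hB : IsHilbertSchmidt B)
    (hT : IsDissipative (1 + C * X * B)) (hunit : IsUnit (1 + C * X * B)) :
    trH (opLog (1 + C * X * B)) = ∫ t in Set.Ioi (0 : ℝ), Complex.I *
      traceForm hC hB (((1 : ℂ) + t * Complex.I)⁻¹ • imagResolvent (1 + C * X * B) t) X := by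
  have hcomm := ((traceForm hC hB).flip X).integral_comp_comm
    (hT.integrableOn_smul_imagResolvent hunit)
  simp only [flip_apply] at hcomm
  rw [integral_const_mul, hcomm, hT.opLog_eq hunit, add_sub_cancel_left, smul_mul_assoc, trH_smul,
    traceForm_apply]

lemma IsDissipative.integrableOn_traceForm_imagResolvent (hC : IsHilbertSchmidt C)
    (hB : IsHilbertSchmidt B) {T : H →L[ℂ] H} (hT : IsDissipative T) (hunit : IsUnit T)
    (X : H →L[ℂ] H) :
    IntegrableOn (fun t : ℝ => Complex.I *
      traceForm hC hB (((1 : ℂ) + t * Complex.I)⁻¹ • imagResolvent T t) X) (Set.Ioi 0) :=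
  (((traceForm hC hB).flip X).integrable_comp
    (hT.integrableOn_smul_imagResolvent hunit)).const_mul _

lemma IsDissipative.hasDerivAt_traceForm_imagResolvent (hC : IsHilbertSchmidt C)
    (hB : IsHilbertSchmidt B) (hR : DifferentiableAt ℂ R z)
    (hT : IsDissipative (1 + C * R z * B)) (hunit : IsUnit (1 + C * R z * B)) {t : ℝ}
    (ht : 0 ≤ t) :
    HasDerivAt (fun w => traceForm hC hB
        (((1 : ℂ) + t * Complex.I)⁻¹ • imagResolvent (1 + C * R w * B) t) (R w))
      (traceForm hC hB (imagResolvent (1 + C * R z * B) t * imagResolvent (1 + C * R z * B) t)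
        (deriv R z)) z := by
  set Q := fun w => imagResolvent (1 + C * R w * B) t
  set S := C * deriv R z * B with hS
  set c := ((1 : ℂ) + t * Complex.I)⁻¹
  have hQ : HasDerivAt Q (-(Q z * S * Q z)) z :=
    hasDerivAt_ringInverse
      (((hR.hasDerivAt.const_mul C).mul_const B |>.const_add 1).add_const _)
      (hT.isUnit_add hunit ht)
  have hform : HasDerivAt (fun w => traceForm hC hB (c • Q w))
      (traceForm hC hB (c • -(Q z * S * Q z))) z :=
    (traceForm hC hB).hasFDerivAt.comp_hasDerivAt z (hQ.const_smul c)
  have hQSQ : Q z * S * Q z = Q z * C * deriv R z * B * Q z := by simp only [hS, mul_assoc]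
  have htc : IsTraceClass (Q z * S * Q z) := by
    simpa only [hQSQ, mul_assoc] using
      isTraceClass_mul_sandwich hC (hB.mul_const (Q z)) (Q z) (deriv R z)
  have hQS : IsTraceClass (-c • (Q z * S)) :=
    (isTraceClass_mul_sandwich hC hB (Q z) (deriv R z)).const_smul _
  have htr : trH (Q z * S * Q z) = trH (Q z * Q z * S) := by
    rw [hQSQ, trH_sandwich_mul_comm (hC.const_mul (Q z)) hB]
    simp only [hS, mul_assoc]
  have hop : c • -(Q z * S * Q z) * (C * R z * B) = Q z * S * Q z + -c • (Q z * S) := by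
    have h := inv_smul_imagResolvent_mul_sub_one (hT.isUnit_add hunit ht)
    rw [add_sub_cancel_left] at h
    calc c • -(Q z * S * Q z) * (C * R z * B) = -(Q z * S * (c • Q z * (C * R z * B))) := by
          simp only [mul_assoc, smul_mul_assoc, mul_smul_comm, neg_mul, smul_neg]
      _ = -(Q z * S * (c • 1 - Q z)) := by rw [h]
      _ = Q z * S * Q z + -c • (Q z * S) := by
          rw [mul_sub, mul_smul_comm, mul_one, neg_sub, neg_smul, sub_eq_add_neg]
  refine (hform.clm_apply hR.hasDerivAt).congr_deriv ?_
  simp only [traceForm_apply, ← hS]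
  rw [hop, trH_add htc hQS, htr, smul_mul_assoc, trH_smul, trH_smul]
  ring

lemma exists_eventually_norm_ringInverse_le_and_norm_deriv_le (hR : AnalyticAt ℂ R z)
    (hunit : IsUnit (1 + C * R z * B)) :
    ∃ M N, ∀ᶠ w in 𝓝 z, DifferentiableAt ℂ R w ∧ IsUnit (1 + C * R w * B) ∧
      ‖Ring.inverse (1 + C * R w * B)‖ ≤ M ∧ ‖deriv R w‖ ≤ N := by
  have hcont : ContinuousAt (fun w => 1 + C * R w * B) z :=
    continuousAt_const.add ((continuousAt_const.mul hR.continuousAt).mul continuousAt_const)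
  have hinv : ContinuousAt (fun w => Ring.inverse (1 + C * R w * B)) z := by
    obtain ⟨u, hu⟩ := hunit
    exact ContinuousAt.comp (hu ▸ NormedRing.inverse_continuousAt u) hcont
  refine ⟨_, _, hR.eventually_analyticAt.mono (fun _ => AnalyticAt.differentiableAt) |>.and <|
    (hcont.eventually (Units.isOpen.mem_nhds hunit)).and <|
    (hinv.norm.eventually_le_const (lt_add_one _)).and
      (hR.deriv.continuousAt.norm.eventually_le_const (lt_add_one _))⟩

lemma IsDissipative.norm_traceForm_imagResolvent_mul_self_le (hC : IsHilbertSchmidt C)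
    (hB : IsHilbertSchmidt B) {T : H →L[ℂ] H} (hT : IsDissipative T) (hunit : IsUnit T)
    {M N : ℝ} (hM : ‖Ring.inverse T‖ ≤ M) (hN : ‖X‖ ≤ N) {t : ℝ} (ht : 0 ≤ t) :
    ‖Complex.I * traceForm hC hB (imagResolvent T t * imagResolvent T t) X‖ ≤
      ‖traceForm hC hB‖ * (1 + 2 * M) ^ 2 * N * ((1 + t)⁻¹) ^ 2 := by
  have hQ : ‖imagResolvent T t‖ ≤ (1 + 2 * M) * (1 + t)⁻¹ :=
    (hT.norm_imagResolvent_le hunit ht).trans (by gcongr)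
  have hM0 : 0 ≤ M := (norm_nonneg _).trans hM
  rw [norm_mul, Complex.norm_I, one_mul]
  calc ‖traceForm hC hB (imagResolvent T t * imagResolvent T t) X‖
      ≤ ‖traceForm hC hB‖ * ‖imagResolvent T t * imagResolvent T t‖ * ‖X‖ := le_opNorm₂ _ _ _
    _ ≤ ‖traceForm hC hB‖ * ((1 + 2 * M) * (1 + t)⁻¹ * ((1 + 2 * M) * (1 + t)⁻¹)) * N := by
      gcongr
      exact norm_mul_le_of_le hQ hQ
    _ = _ := by ring

theorem hasDerivAt_trH_opLog (hC : IsHilbertSchmidt C) (hB : IsHilbertSchmidt B)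
    (hR : AnalyticAt ℂ R z) (hdiss : ∀ᶠ w in 𝓝 z, IsDissipative (1 + C * R w * B))
    (hunit : IsUnit (1 + C * R z * B)) :
    HasDerivAt (fun w => trH (opLog (1 + C * R w * B)))
      (trH (Ring.inverse (1 + C * R z * B) * (C * deriv R z * B))) z := by
  obtain ⟨M, N, hbound⟩ := exists_eventually_norm_ringInverse_le_and_norm_deriv_le hR hunit
  have hnear := hdiss.and hbound
  set Φ := fun w => 1 + C * R w * B
  set F := fun w (t : ℝ) => Complex.I *
    traceForm hC hB (((1 : ℂ) + t * Complex.I)⁻¹ • imagResolvent (Φ w) t) (R w)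
  set F' := fun w t => Complex.I *
    traceForm hC hB (imagResolvent (Φ w) t * imagResolvent (Φ w) t) (deriv R w)
  have hlog : (fun w => trH (opLog (Φ w))) =ᶠ[𝓝 z] fun w => ∫ t in Set.Ioi (0 : ℝ), F w t :=
    hnear.mono fun w ⟨hT, _, hu, _⟩ => hT.trH_opLog_one_add hC hB hu
  have hF : ∀ᶠ w in 𝓝 z, IntegrableOn (F w) (Set.Ioi 0) :=
    hnear.mono fun w ⟨hT, _, hu, _⟩ => hT.integrableOn_traceForm_imagResolvent hC hB hu _
  have hQQ := hdiss.self_of_nhds.integrableOn_imagResolvent_mul_self hunit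
  have hF' : IntegrableOn (F' z) (Set.Ioi 0) :=
    (((traceForm hC hB).flip (deriv R z)).integrable_comp hQQ).const_mul _
  have hval : ∫ t in Set.Ioi (0 : ℝ), F' z t =
      trH (Ring.inverse (Φ z) * (C * deriv R z * B)) := by
    have hcomm := ((traceForm hC hB).flip (deriv R z)).integral_comp_comm hQQ
    simp only [flip_apply] at hcomm
    rw [integral_const_mul, hcomm, traceForm_apply, ← trH_smul, ← smul_mul_assoc,
      hdiss.self_of_nhds.smul_integral_imagResolvent_mul_self hunit]
  refine HasDerivAt.congr_of_eventuallyEq (hval ▸ ?_) hlog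
  exact (hasDerivAt_integral_of_dominated_loc_of_deriv_le hnear
    (hF.mono fun w hw => hw.aestronglyMeasurable) hF.self_of_nhds hF'.aestronglyMeasurable
    ((ae_restrict_mem measurableSet_Ioi).mono fun t ht w ⟨hT, _, hu, hM, hN⟩ =>
      hT.norm_traceForm_imagResolvent_mul_self_le hC hB hu hM hN (le_of_lt ht))
    (integrableOn_sq_inv_one_add.const_mul _)
    ((ae_restrict_mem measurableSet_Ioi).mono fun t ht w ⟨hT, hd, hu, _⟩ =>
      (hT.hasDerivAt_traceForm_imagResolvent hC hB hd hu (le_of_lt ht)).const_mul _)).2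

end TraceLog


section Resolvent

variable (A : SelfAdjointOp H) {A' A'' : SelfAdjointOp H} {V W : H →L[ℂ] H} {z w : ℂ}

namespace SelfAdjointOp

lemma op_inner_self_im (x : A.dom) : (⟪A.op x, (x : H)⟫_ℂ).im = 0 := by
  rw [← Complex.conj_eq_iff_im, inner_conj_symm, A.symmetric]

lemma adjoint_resolvent (hz : z.im ≠ 0) :
    (A.resolvent z)† = A.resolvent (starRingEnd ℂ z) := by
  have hz' : (starRingEnd ℂ z).im ≠ 0 := by simpa using hz
  refine ((eq_adjoint_iff _ _).2 fun x y => ?_).symm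
  conv_lhs => rw [← A.op_resolvent hz y]
  conv_rhs => rw [← A.op_resolvent hz' x]
  rw [inner_sub_right, inner_sub_left, inner_smul_left, inner_smul_right, Complex.conj_conj,
    A.symmetric ⟨_, A.resolvent_mem hz' x⟩ ⟨_, A.resolvent_mem hz y⟩]

lemma inner_resolvent_im (hz : z.im ≠ 0) (x : H) :
    (⟪x, A.resolvent z x⟫_ℂ).im = z.im * ‖A.resolvent z x‖ ^ 2 := by
  set y : A.dom := ⟨A.resolvent z x, A.resolvent_mem hz x⟩
  calc (⟪x, A.resolvent z x⟫_ℂ).im = (⟪A.op y - z • (y : H), (y : H)⟫_ℂ).im := by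
        rw [A.op_resolvent hz x]
    _ = z.im * ‖A.resolvent z x‖ ^ 2 := by
        rw [inner_sub_left, inner_smul_left, inner_self_eq_ofReal_sq_norm, Complex.sub_im,
          A.op_inner_self_im, Complex.im_mul_ofReal, Complex.conj_im]
        ring

lemma resolvent_sub_resolvent (hw : w.im ≠ 0) (hz : z.im ≠ 0) :
    A.resolvent w - A.resolvent z = (w - z) • (A.resolvent w * A.resolvent z) := by
  ext x
  set y := A.resolvent z x with hy
  have hx : x = A.op ⟨y, A.resolvent_mem hz x⟩ - w • y + (w - z) • y := by
    conv_lhs => rw [← A.op_resolvent hz x]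
    module
  have hwx : A.resolvent w x = y + (w - z) • A.resolvent w y := by
    conv_lhs => rw [hx]
    rw [map_add, map_smul, A.resolvent_op hw ⟨y, _⟩]
  rw [sub_apply, hwx, smul_apply, mul_apply_eq_comp, ← hy, add_sub_cancel_left]

lemma hasDerivAt_resolvent (hz : z.im ≠ 0) :
    HasDerivAt A.resolvent (A.resolvent z * A.resolvent z) z := by
  set R := A.resolvent z
  set S : ℂ → H →L[ℂ] H := fun w => 1 - (w - z) • R
  have hS : HasDerivAt S (-R) z := by
    simpa using (((hasDerivAt_id z).sub_const z).smul_const R).const_sub 1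
  have hSz : S z = 1 := by simp [S]
  have hprod : HasDerivAt (fun w => R * Ring.inverse (S w)) (R * R) z := by
    have hSz_unit : IsUnit (S z) := hSz ▸ isUnit_one
    simpa [hSz] using (hasDerivAt_ringInverse hS hSz_unit).const_mul R
  refine hprod.congr_of_eventuallyEq ?_
  have hunit : ∀ᶠ w in 𝓝 z, IsUnit (S w) :=
    hS.continuousAt.eventually (Units.isOpen.mem_nhds (hSz ▸ isUnit_one))
  filter_upwards [hunit, Complex.continuous_im.continuousAt.eventually_ne hz] with w hu hw
  have hcancel : A.resolvent w * S w = R := by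
    rw [mul_sub, mul_one, mul_smul_comm, ← A.resolvent_sub_resolvent hw hz, sub_sub_cancel]
  rw [← hcancel, mul_assoc, Ring.mul_inverse_cancel _ hu, mul_one]

lemma analyticAt_resolvent (hz : z.im ≠ 0) : AnalyticAt ℂ A.resolvent z :=
  Complex.analyticAt_iff_eventually_differentiableAt.2 <|
    (Complex.continuous_im.continuousAt.eventually_ne hz).mono fun _ hw =>
      (A.hasDerivAt_resolvent hw).differentiableAt

end SelfAdjointOp

variable {A}

lemma IsSumOf.symm (h : IsSumOf A' A V) : IsSumOf A A' (-V) := by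
  refine ⟨h.1.symm, fun x hA hA' => ?_⟩
  rw [h.2 x hA' hA, neg_apply, add_neg_cancel_right]

lemma IsSumOf.trans (h : IsSumOf A' A V) (h' : IsSumOf A'' A' W) : IsSumOf A'' A (V + W) := by
  refine ⟨h'.1.trans h.1, fun x hA'' hA => ?_⟩
  have hA' : x ∈ A'.dom := h.1 ▸ hA
  rw [h'.2 x hA'' hA', h.2 x hA' hA, add_apply, add_assoc]

lemma IsSumOf.resolvent_sub_resolvent (h : IsSumOf A' A V) (hz : z.im ≠ 0) :
    A.resolvent z - A'.resolvent z = A.resolvent z * V * A'.resolvent z := by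
  ext x
  set y := A'.resolvent z x with hy
  have hyA' : y ∈ A'.dom := A'.resolvent_mem hz x
  have hyA : y ∈ A.dom := h.1 ▸ hyA'
  have hx : x = A.op ⟨y, hyA⟩ - z • y + V y := by
    rw [sub_add_eq_add_sub, ← h.2 y hyA' hyA]
    exact (A'.op_resolvent hz x).symm
  have hRx : A.resolvent z x = y + A.resolvent z (V y) := by
    conv_lhs => rw [hx]
    rw [map_add, A.resolvent_op hz ⟨y, hyA⟩]
  rw [sub_apply, hRx, mul_apply_eq_comp, mul_apply_eq_comp, ← hy, add_sub_cancel_left]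

lemma IsSumOf.resolvent_sub_resolvent' (h : IsSumOf A' A V) (hz : z.im ≠ 0) :
    A.resolvent z - A'.resolvent z = A'.resolvent z * V * A.resolvent z := by
  rw [← neg_sub, h.symm.resolvent_sub_resolvent hz, mul_neg, neg_mul, neg_neg]

end Resolvent


section BirmanSchwinger

/-- The Birman–Schwinger operator `1 + s B* (A - z)⁻¹ B` of the perturbation `A + s B B*`.
For `B = K J₊`, `s = 1` it is `Φ₊(z)`, and for `B = K J₋`, `s = -1` it is `Φ̃₋(z)`. -/
def birmanSchwinger (A : SelfAdjointOp H) (B : H →L[ℂ] H) (s : ℝ) (z : ℂ) : H →L[ℂ] H :=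
  1 + B† * ((s : ℂ) • A.resolvent z) * B

variable {A A' : SelfAdjointOp H} {B : H →L[ℂ] H} {s : ℝ} {z : ℂ}

lemma adjoint_birmanSchwinger (hz : z.im ≠ 0) :
    (birmanSchwinger A B s z)† = birmanSchwinger A B s (starRingEnd ℂ z) := by
  rw [birmanSchwinger, map_add, adjoint_mul, adjoint_mul, adjoint_adjoint, map_smulₛₗ,
    Complex.conj_ofReal, A.adjoint_resolvent hz, ← mul_assoc, birmanSchwinger]
  exact congrArg (· + _) (star_one (H →L[ℂ] H))

lemma isDissipative_birmanSchwinger (hz : 0 < s * z.im) :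
    IsDissipative (birmanSchwinger A B s z) := by
  intro x
  rw [birmanSchwinger, add_apply, one_apply_eq_self, mul_apply_eq_comp, mul_apply_eq_comp,
    inner_add_right, inner_self_eq_ofReal_sq_norm, adjoint_inner_right, smul_apply,
    inner_smul_right, Complex.add_im, Complex.ofReal_im, Complex.im_ofReal_mul,
    A.inner_resolvent_im (right_ne_zero_of_mul hz.ne'), zero_add, ← mul_assoc]
  positivity

lemma birmanSchwinger_mul_birmanSchwinger (h : IsSumOf A' A ((s : ℂ) • (B * B†)))
    (hz : z.im ≠ 0) : birmanSchwinger A B s z * birmanSchwinger A' B (-s) z = 1 := by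
  calc birmanSchwinger A B s z * birmanSchwinger A' B (-s) z
      = 1 + (s : ℂ) • (B† * ((A.resolvent z - A'.resolvent z) -
          A.resolvent z * ((s : ℂ) • (B * B†)) * A'.resolvent z) * B) := by
        simp only [birmanSchwinger, Complex.ofReal_neg, mul_add, add_mul, mul_sub, sub_mul,
          mul_smul_comm, smul_mul_assoc, mul_assoc, one_mul, mul_one]
        module
    _ = 1 := by rw [h.resolvent_sub_resolvent hz, sub_self, mul_zero, zero_mul, smul_zero, add_zero]

lemma birmanSchwinger_neg_mul_birmanSchwinger (h : IsSumOf A' A ((s : ℂ) • (B * B†)))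
    (hz : z.im ≠ 0) : birmanSchwinger A' B (-s) z * birmanSchwinger A B s z = 1 := by
  have hsymm : IsSumOf A A' (((-s : ℝ) : ℂ) • (B * B†)) := by simpa using h.symm
  simpa using birmanSchwinger_mul_birmanSchwinger hsymm hz

lemma isUnit_birmanSchwinger (h : IsSumOf A' A ((s : ℂ) • (B * B†))) (hz : z.im ≠ 0) :
    IsUnit (birmanSchwinger A B s z) :=
  ⟨⟨_, _, birmanSchwinger_mul_birmanSchwinger h hz,
    birmanSchwinger_neg_mul_birmanSchwinger h hz⟩, rfl⟩

lemma ringInverse_birmanSchwinger (h : IsSumOf A' A ((s : ℂ) • (B * B†))) (hz : z.im ≠ 0) :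
    Ring.inverse (birmanSchwinger A B s z) = birmanSchwinger A' B (-s) z :=
  Ring.inverse_unit ⟨_, _, birmanSchwinger_mul_birmanSchwinger h hz,
    birmanSchwinger_neg_mul_birmanSchwinger h hz⟩

lemma birmanSchwinger_neg_mul_adjoint_mul_resolvent (h : IsSumOf A' A ((s : ℂ) • (B * B†)))
    (hz : z.im ≠ 0) :
    birmanSchwinger A' B (-s) z * (B† * A.resolvent z) = B† * A'.resolvent z := by
  calc birmanSchwinger A' B (-s) z * (B† * A.resolvent z)
      = B† * (A.resolvent z - A'.resolvent z * ((s : ℂ) • (B * B†)) * A.resolvent z) := by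
        simp only [birmanSchwinger, Complex.ofReal_neg, add_mul, mul_sub, mul_smul_comm,
          smul_mul_assoc, mul_assoc, one_mul]
        module
    _ = B† * A'.resolvent z := by rw [← h.resolvent_sub_resolvent' hz, sub_sub_cancel]

lemma resolvent_sub_resolvent_eq_smul (h : IsSumOf A' A ((s : ℂ) • (B * B†))) (hz : z.im ≠ 0) :
    A.resolvent z - A'.resolvent z =
      (s : ℂ) • (A.resolvent z * B * (B† * A'.resolvent z)) := by
  rw [h.resolvent_sub_resolvent hz]
  simp only [mul_smul_comm, smul_mul_assoc, mul_assoc]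

lemma isTraceClass_resolvent_sub_resolvent (hB : IsHilbertSchmidt B)
    (h : IsSumOf A' A ((s : ℂ) • (B * B†))) (hz : z.im ≠ 0) :
    IsTraceClass (A.resolvent z - A'.resolvent z) := by
  rw [resolvent_sub_resolvent_eq_smul h hz]
  exact ((hB.const_mul _).isTraceClass_mul (hB.adjoint.mul_const _)).const_smul _

lemma trH_resolvent_sub_resolvent (hB : IsHilbertSchmidt B)
    (h : IsSumOf A' A ((s : ℂ) • (B * B†))) (hz : z.im ≠ 0) :
    trH (A.resolvent z - A'.resolvent z) = trH (Ring.inverse (birmanSchwinger A B s z) *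
      (B† * ((s : ℂ) • (A.resolvent z * A.resolvent z)) * B)) := by
  rw [resolvent_sub_resolvent_eq_smul h hz, trH_smul,
    trH_mul_comm (hB.const_mul _) (hB.adjoint.mul_const _),
    ← birmanSchwinger_neg_mul_adjoint_mul_resolvent h hz, ringInverse_birmanSchwinger h hz,
    ← trH_smul]
  simp only [mul_smul_comm, smul_mul_assoc, mul_assoc]

theorem hasDerivAt_trH_opLog_birmanSchwinger (hB : IsHilbertSchmidt B)
    (h : IsSumOf A' A ((s : ℂ) • (B * B†))) (hz : 0 < s * z.im) :
    HasDerivAt (fun w => trH (opLog (birmanSchwinger A B s w)))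
      (trH (A.resolvent z - A'.resolvent z)) z := by
  have hz0 : z.im ≠ 0 := right_ne_zero_of_mul hz.ne'
  have hdiss : ∀ᶠ w in 𝓝 z, IsDissipative (birmanSchwinger A B s w) := by
    have hcont : ContinuousAt (fun w : ℂ => s * w.im) z := by fun_prop
    exact (hcont.eventually_const_lt hz).mono fun w hw => isDissipative_birmanSchwinger hw
  have hderiv : HasDerivAt (fun w => (s : ℂ) • A.resolvent w)
      ((s : ℂ) • (A.resolvent z * A.resolvent z)) z :=
    (A.hasDerivAt_resolvent hz0).const_smul (s : ℂ)
  rw [trH_resolvent_sub_resolvent hB h hz0, ← hderiv.deriv]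
  exact hasDerivAt_trH_opLog hB.adjoint hB
    (analyticAt_const.fun_smul (A.analyticAt_resolvent hz0)) hdiss (isUnit_birmanSchwinger h hz0)

theorem hasDerivAt_trH_opLogAnti_birmanSchwinger (hB : IsHilbertSchmidt B)
    (h : IsSumOf A' A ((s : ℂ) • (B * B†))) (hz : s * z.im < 0) :
    HasDerivAt (fun w => trH (opLogAnti (birmanSchwinger A B s w)))
      (trH (A.resolvent z - A'.resolvent z)) z := by
  have hz0 : z.im ≠ 0 := right_ne_zero_of_mul hz.ne
  have hconj : 0 < s * (starRingEnd ℂ z).im := by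
    rw [Complex.conj_im]
    linarith
  have hderiv := (hasDerivAt_trH_opLog_birmanSchwinger hB h hconj).conj_conj
  rw [← trH_adjoint, map_sub, ← A.adjoint_resolvent hz0, ← A'.adjoint_resolvent hz0,
    adjoint_adjoint, adjoint_adjoint, Complex.conj_conj] at hderiv
  refine hderiv.congr_of_eventuallyEq ?_
  filter_upwards [Complex.continuous_im.continuousAt.eventually_ne hz0] with w hw
  simp only [Function.comp_apply, opLogAnti, adjoint_birmanSchwinger hw, trH_adjoint]

theorem hasDerivAt_trH_logHerg_birmanSchwinger (hB : IsHilbertSchmidt B)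
    (h : IsSumOf A' A ((s : ℂ) • (B * B†))) (hs : 0 < s) (hz : z.im ≠ 0) :
    HasDerivAt (fun w => trH (logHerg (birmanSchwinger A B s) w))
      (trH (A.resolvent z - A'.resolvent z)) z := by
  rcases hz.lt_or_gt with hneg | hpos
  · refine (hasDerivAt_trH_opLogAnti_birmanSchwinger hB h
      (mul_neg_of_pos_of_neg hs hneg)).congr_of_eventuallyEq ?_
    filter_upwards [Complex.continuous_im.continuousAt.eventually_lt_const hneg] with w hw
    rw [logHerg, if_neg hw.not_gt]
  · refine (hasDerivAt_trH_opLog_birmanSchwinger hB h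
      (mul_pos hs hpos)).congr_of_eventuallyEq ?_
    filter_upwards [Complex.continuous_im.continuousAt.eventually_const_lt hpos] with w hw
    rw [logHerg, if_pos hw]

theorem hasDerivAt_trH_logAntiHerg_birmanSchwinger (hB : IsHilbertSchmidt B)
    (h : IsSumOf A' A ((s : ℂ) • (B * B†))) (hs : s < 0) (hz : z.im ≠ 0) :
    HasDerivAt (fun w => trH (logAntiHerg (birmanSchwinger A B s) w))
      (trH (A.resolvent z - A'.resolvent z)) z := by
  rcases hz.lt_or_gt with hneg | hpos
  · refine (hasDerivAt_trH_opLog_birmanSchwinger hB h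
      (mul_pos_of_neg_of_neg hs hneg)).congr_of_eventuallyEq ?_
    filter_upwards [Complex.continuous_im.continuousAt.eventually_lt_const hneg] with w hw
    rw [logAntiHerg, if_neg hw.not_gt]
  · refine (hasDerivAt_trH_opLogAnti_birmanSchwinger hB h
      (mul_neg_of_neg_of_pos hs hpos)).congr_of_eventuallyEq ?_
    filter_upwards [Complex.continuous_im.continuousAt.eventually_const_lt hpos] with w hw
    rw [logAntiHerg, if_pos hw]

end BirmanSchwinger

section SpectralProjections

variable {J K P : H →L[ℂ] H}

lemma isSelfAdjoint_Jplus (hJ : IsSelfAdjoint J) : IsSelfAdjoint (Jplus J) := by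
  have htwo : IsSelfAdjoint (2 : ℂ)⁻¹ := by simp [isSelfAdjoint_iff]
  exact htwo.smul ((IsSelfAdjoint.one _).add hJ)

lemma isStarProjection_Jplus (hJ : IsSelfAdjoint J) (hJ2 : J * J = 1) :
    IsStarProjection (Jplus J) where
  isIdempotentElem := by
    simp only [IsIdempotentElem, Jplus, smul_mul_assoc, mul_smul_comm, mul_add, add_mul, one_mul,
      mul_one, hJ2]
    module
  isSelfAdjoint := isSelfAdjoint_Jplus hJ

omit [CompleteSpace H] in
lemma Jminus_eq_Jplus_neg (J : H →L[ℂ] H) : Jminus J = Jplus (-J) := by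
  rw [Jminus, Jplus, sub_eq_add_neg]

lemma isSelfAdjoint_Jminus (hJ : IsSelfAdjoint J) : IsSelfAdjoint (Jminus J) :=
  Jminus_eq_Jplus_neg J ▸ isSelfAdjoint_Jplus hJ.neg

lemma isStarProjection_Jminus (hJ : IsSelfAdjoint J) (hJ2 : J * J = 1) :
    IsStarProjection (Jminus J) :=
  Jminus_eq_Jplus_neg J ▸ isStarProjection_Jplus hJ.neg (by rw [neg_mul_neg, hJ2])

omit [CompleteSpace H] in
lemma sub_Jplus (J : H →L[ℂ] H) : J - Jplus J = -Jminus J := by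
  simp only [Jplus, Jminus]
  module

lemma mul_mul_adjoint_of_isStarProjection (hP : IsStarProjection P) (K : H →L[ℂ] H) :
    K * P * (K * P)† = K * P * K† := by
  rw [adjoint_mul, show P† = P from hP.isSelfAdjoint, ← mul_assoc, mul_assoc K P P,
    hP.isIdempotentElem.eq]

lemma PhiPlus_eq_birmanSchwinger (H0 : SelfAdjointOp H) (hJ : IsSelfAdjoint J)
    (K : H →L[ℂ] H) : PhiPlus H0 J K = birmanSchwinger H0 (K * Jplus J) 1 := by
  have hadj : (Jplus J)† = Jplus J := isSelfAdjoint_Jplus hJ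
  funext z
  simp only [PhiPlus, birmanSchwinger, adjoint_mul, hadj, Complex.ofReal_one, one_smul, mul_assoc]

lemma PhiMinusT_eq_birmanSchwinger (Hp : SelfAdjointOp H) (hJ : IsSelfAdjoint J)
    (K : H →L[ℂ] H) : PhiMinusT Hp J K = birmanSchwinger Hp (K * Jminus J) (-1) := by
  have hadj : (Jminus J)† = Jminus J := isSelfAdjoint_Jminus hJ
  funext z
  simp only [PhiMinusT, birmanSchwinger, adjoint_mul, hadj, Complex.ofReal_neg,
    Complex.ofReal_one, neg_smul, one_smul, mul_neg, neg_mul, mul_assoc, sub_eq_add_neg]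

lemma isSumOf_one_smul_mul_Jplus {H0 Hp : SelfAdjointOp H} (hJ : IsSelfAdjoint J)
    (hJ2 : J * J = 1) (hsump : IsSumOf Hp H0 (K * Jplus J * K†)) :
    IsSumOf Hp H0 (((1 : ℝ) : ℂ) • (K * Jplus J * (K * Jplus J)†)) := by
  rwa [mul_mul_adjoint_of_isStarProjection (isStarProjection_Jplus hJ hJ2), Complex.ofReal_one,
    one_smul]

lemma isSumOf_neg_one_smul_mul_Jminus {H0 Hp Hfull : SelfAdjointOp H} (hJ : IsSelfAdjoint J)
    (hJ2 : J * J = 1) (hsump : IsSumOf Hp H0 (K * Jplus J * K†))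
    (hsum : IsSumOf Hfull H0 (K * J * K†)) :
    IsSumOf Hfull Hp (((-1 : ℝ) : ℂ) • (K * Jminus J * (K * Jminus J)†)) := by
  have hV : -(K * Jplus J * K†) + K * J * K† = -(K * Jminus J * K†) := by
    rw [← sub_eq_neg_add, ← sub_mul, ← mul_sub, sub_Jplus, mul_neg, neg_mul]
  rw [mul_mul_adjoint_of_isStarProjection (isStarProjection_Jminus hJ hJ2), Complex.ofReal_neg,
    Complex.ofReal_one, neg_smul, one_smul, ← hV]
  exact hsump.symm.trans hsum

end SpectralProjections

theorem trace_resolvent_diff_eq_deriv_trace_log_general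
    (H0 Hp Hfull : SelfAdjointOp H) (J K : H →L[ℂ] H)
    (hJ : IsSelfAdjoint J) (hJ2 : J * J = 1) (hK : IsHilbertSchmidt K)
    (hsump : IsSumOf Hp H0 (K * Jplus J * ContinuousLinearMap.adjoint K))
    (hsum : IsSumOf Hfull H0 (K * J * ContinuousLinearMap.adjoint K)) :
    ∀ z : ℂ, z.im ≠ 0 →
      IsTraceClass (H0.resolvent z - Hp.resolvent z) ∧
      IsTraceClass (Hp.resolvent z - Hfull.resolvent z) ∧
      HasDerivAt (fun w : ℂ => trH (logHerg (PhiPlus H0 J K) w))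
        (trH (H0.resolvent z - Hp.resolvent z)) z ∧
      HasDerivAt (fun w : ℂ => trH (logAntiHerg (PhiMinusT Hp J K) w))
        (trH (Hp.resolvent z - Hfull.resolvent z)) z := by
  intro z hz
  have hp := isSumOf_one_smul_mul_Jplus hJ hJ2 hsump
  have hm := isSumOf_neg_one_smul_mul_Jminus hJ hJ2 hsump hsum
  have hKp : IsHilbertSchmidt (K * Jplus J) := hK.mul_const _
  have hKm : IsHilbertSchmidt (K * Jminus J) := hK.mul_const _
  rw [PhiPlus_eq_birmanSchwinger H0 hJ K, PhiMinusT_eq_birmanSchwinger Hp hJ K]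
  exact ⟨isTraceClass_resolvent_sub_resolvent hKp hp hz,
    isTraceClass_resolvent_sub_resolvent hKm hm hz,
    hasDerivAt_trH_logHerg_birmanSchwinger hKp hp one_pos hz,
    hasDerivAt_trH_logAntiHerg_birmanSchwinger hKm hm neg_one_lt_zero hz⟩

/-- Lemma 3.3: under Hypothesis 3.1, with `H₊ = H₀ + KJ₊K*` and `H = H₀ + KJK*`, the
resolvent differences are trace class and
`tr((H₀-z)⁻¹ - (H₊-z)⁻¹) = d/dz tr log Φ₊(z)`,
`tr((H₊-z)⁻¹ - (H-z)⁻¹) = d/dz tr log Φ̃₋(z)` for `z ∈ ℂ∖ℝ`. -/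
theorem trace_resolvent_diff_eq_deriv_trace_log [SeparableSpace H]
    (H0 Hp Hfull : SelfAdjointOp H) (J K : H →L[ℂ] H)
    (hJ : IsSelfAdjoint J) (hJ2 : J * J = 1) (hK : IsHilbertSchmidt K)
    (hsump : IsSumOf Hp H0 (K * Jplus J * ContinuousLinearMap.adjoint K))
    (hsum : IsSumOf Hfull H0 (K * J * ContinuousLinearMap.adjoint K)) :
    ∀ z : ℂ, z.im ≠ 0 →
      IsTraceClass (H0.resolvent z - Hp.resolvent z) ∧
      IsTraceClass (Hp.resolvent z - Hfull.resolvent z) ∧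
      HasDerivAt (fun w : ℂ => trH (logHerg (PhiPlus H0 J K) w))
        (trH (H0.resolvent z - Hp.resolvent z)) z ∧
      HasDerivAt (fun w : ℂ => trH (logAntiHerg (PhiMinusT Hp J K) w))
        (trH (Hp.resolvent z - Hfull.resolvent z)) z := by
  exact trace_resolvent_diff_eq_deriv_trace_log_general H0 Hp Hfull J K hJ hJ2 hK hsump hsum

end SpectralShift
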